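/- Let f, g : ℝⁿ → ℝ be smooth functions which, together with all their derivatives, grow at most polynomially. For q ∈ ℝⁿ set f̄_Δt(q) = E_{G,U}[f(δ_Δt(q,G,U))] and ḡ_Δt(q) = E_{G,U}[g(δ_Δt(q,G,U))]. Then there exist C ≥ 0 and Δt* > 0 such that for all 0 < Δt ≤ Δt* and all q ∈ ℝⁿ, |Δt⁻¹ E_{G,U}[(f(δ_Δt(q,G,U)) − f̄_Δt(q)) (g(δ_Δt(q,G,U)) − ḡ_Δt(q))] − 2 ∇f(0)·∇g(0)| ≤ C Δt. -/

import Mathlib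

/-!
Write `s = √(2Δt)`. Along the proposed increment `s G - (s² / 2) ∇V(q)`, the observable `f - f(0)`
is `W₁ + W₂ + O(s³)` with `W₁ = s ⟪∇f(0), G⟫` odd and `W₂ = O(s²)` even in the noise `G`, and errors
polynomial in `|G|`. The log Metropolis ratio is a trapezoidal-rule error plus a term of order `Δt`,
so a rejection has probability `O(s²)`. By symmetry of the Gaussian the terms of odd order integrate
to zero: the mean of `f(δ) - f(0)` is `O(s²)`, so the product of the two means is `O(s⁴)`, and the
second moment is `E[W₁ Z₁] + O(s⁴) = s² ⟪∇f(0), ∇g(0)⟫ + O(s⁴)`, its terms of order `s³` being odd.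
-/

open MeasureTheory RealInnerProductSpace

noncomputable section

abbrev En (n : ℕ) := EuclideanSpace ℝ (Fin n)

/-- Gaussian proposal density of the Euler–Maruyama scheme. -/
def Tker {n : ℕ} (V : En n → ℝ) (dt : ℝ) (q q' : En n) : ℝ :=
  (4 * Real.pi * dt) ^ (-(n : ℝ) / 2) *
    Real.exp (-‖q' - q + dt • gradient V q‖ ^ 2 / (4 * dt))

/-- Metropolis acceptance probability. -/
def Rk {n : ℕ} (V : En n → ℝ) (dt : ℝ) (q q' : En n) : ℝ :=
  min 1 (Real.exp (-V q') * Tker V dt q' q / (Real.exp (-V q) * Tker V dt q q'))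

/-- proposal move -/
def propMove {n : ℕ} (V : En n → ℝ) (dt : ℝ) (q g : En n) : En n :=
  q - dt • gradient V q + Real.sqrt (2 * dt) • g

def xi {n : ℕ} (V : En n → ℝ) (q g : En n) : ℝ :=
  -(Real.sqrt 2 / 6) * iteratedFDeriv ℝ 3 V q (fun _ => g) +
    (Real.sqrt 2 / 2) * ⟪gradient V q, fderiv ℝ (gradient V) q g⟫

def xiPlus {n : ℕ} (V : En n → ℝ) (q g : En n) : ℝ := max (xi V q g) 0

/-- standard Gaussian measure on ℝⁿ -/
def gauss (n : ℕ) : Measure (En n) :=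
  volume.withDensity fun g =>
    ENNReal.ofReal ((2 * Real.pi) ^ (-(n : ℝ) / 2) * Real.exp (-‖g‖ ^ 2 / 2))

/-- fundamental domain of the torus -/
def Box (n : ℕ) (L : ℝ) : Set (En n) := {q | ∀ i, q i ∈ Set.Ico (0 : ℝ) L}

/-- integral with respect to the Gibbs measure μ on the torus M -/
def muInt {n : ℕ} (V : En n → ℝ) (L : ℝ) (f : En n → ℝ) : ℝ :=
  (∫ q in Box n L, Real.exp (-V q))⁻¹ * ∫ q in Box n L, f q * Real.exp (-V q)

/-- Laplacian -/
def lap {n : ℕ} (ψ : En n → ℝ) (q : En n) : ℝ :=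
  ∑ i, iteratedFDeriv ℝ 2 ψ q (fun _ => EuclideanSpace.single i (1 : ℝ))

/-- generator of the overdamped Langevin dynamics -/
def gen {n : ℕ} (V ψ : En n → ℝ) (q : En n) : ℝ :=
  -⟪gradient V q, gradient ψ q⟫ + lap ψ q

/-- MALA transition operator on periodic functions -/
def Pmala {n : ℕ} (V : En n → ℝ) (dt : ℝ) (f : En n → ℝ) (q : En n) : ℝ :=
  f q + ∫ q', Rk V dt q q' * Tker V dt q q' * (f q' - f q)

/-- the operator D₁ -/
def D1op {n : ℕ} (V ψ : En n → ℝ) (q : En n) : ℝ :=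
  2 * ∑ i, ∑ j, (iteratedFDeriv ℝ 2 V q ![EuclideanSpace.single i (1:ℝ), EuclideanSpace.single j (1:ℝ)]) *
      (iteratedFDeriv ℝ 2 ψ q ![EuclideanSpace.single i (1:ℝ), EuclideanSpace.single j (1:ℝ)])
    + ⟪gradient (fun x => lap V x) q, gradient ψ q⟫
    - ⟪gradient V q, fderiv ℝ (gradient V) q (gradient ψ q)⟫

/-- the operator D₂ -/
def D2op {n : ℕ} (V ψ : En n → ℝ) (q : En n) : ℝ :=
  -Real.sqrt 2 * ⟪∫ g, xiPlus V q g • g ∂(gauss n), gradient ψ q⟫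

/-- the operator A appearing in the expansion of the MALA evolution operator -/
def Aop {n : ℕ} (V ψ : En n → ℝ) (q : En n) : ℝ :=
  (gen V (gen V ψ) q + D1op V ψ q + D2op V ψ q) / 2

/-- Metropolized increment -/
def deltaInc {n : ℕ} (V : En n → ℝ) (dt : ℝ) (q g : En n) (u : ℝ) : En n :=
  if u ≤ Rk V dt q (propMove V dt q g) then (-dt) • gradient V q + Real.sqrt (2 * dt) • g
  else 0

/-- expectation over G (std Gaussian) and U (uniform on [0,1]) of the increment -/
def EguDelta {n : ℕ} (V : En n → ℝ) (dt : ℝ) (q : En n) : En n :=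
  ∫ g, (∫ u in Set.Icc (0 : ℝ) 1, deltaInc V dt q g u) ∂(gauss n)


/-- average of an observable of the Metropolized increment over G and U -/
def obsbar {n : ℕ} (V : En n → ℝ) (dt : ℝ) (f : En n → ℝ) (q : En n) : ℝ :=
  ∫ g, (∫ u in Set.Icc (0 : ℝ) 1, f (deltaInc V dt q g u)) ∂(gauss n)

/-- covariance of two observables of the Metropolized increment -/
def obscov {n : ℕ} (V : En n → ℝ) (dt : ℝ) (f g : En n → ℝ) (q : En n) : ℝ :=
  ∫ g', (∫ u in Set.Icc (0 : ℝ) 1,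
    (f (deltaInc V dt q g' u) - obsbar V dt f q) *
      (g (deltaInc V dt q g' u) - obsbar V dt g q)) ∂(gauss n)

open Asymptotics Filter ProbabilityTheory

/-! ### The standard Gaussian measure -/

section StdGaussian

variable {E : Type*} [NormedAddCommGroup E] [InnerProductSpace ℝ E] [FiniteDimensional ℝ E]
  [MeasurableSpace E] [BorelSpace E]

theorem integrable_exp_neg_sq_norm : Integrable fun x : E ↦ Real.exp (-‖x‖ ^ 2 / 2) := by
  refine (GaussianFourier.integrable_cexp_neg_mul_sq_norm_add (b := 1 / 2)
    (by norm_num) 0 (0 : E)).re.congr (.of_forall fun x ↦ ?_)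
  have harg : -(1 / 2 : ℂ) * ‖x‖ ^ 2 + 0 * ⟪0, x⟫ = ((-‖x‖ ^ 2 / 2 : ℝ) : ℂ) := by
    push_cast
    ring
  simp only [harg]
  exact Complex.exp_ofReal_re _

theorem integral_exp_neg_sq_norm_smul_cexp_inner (t : E) :
    ∫ x : E, Real.exp (-‖x‖ ^ 2 / 2) • Complex.exp (⟪x, t⟫ * Complex.I) =
      ((2 * Real.pi) ^ (Module.finrank ℝ E / 2 : ℝ) : ℝ) * Complex.exp (-‖t‖ ^ 2 / 2) := by
  have h := GaussianFourier.integral_cexp_neg_mul_sq_norm_add (b := 1 / 2)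
    (by norm_num) Complex.I t
  convert! h using 2
  · ext x
    rw [Complex.real_smul, Complex.ofReal_exp, ← Complex.exp_add, real_inner_comm]
    congr 1
    push_cast
    ring
  · rw [Complex.ofReal_cpow (by positivity)]
    congr 1 <;> push_cast <;> ring
  · rw [Complex.I_sq]
    ring_nf

theorem withDensity_eq_stdGaussian :
    (volume.withDensity fun x : E ↦ ENNReal.ofReal
      ((2 * Real.pi) ^ (-(Module.finrank ℝ E : ℝ) / 2) * Real.exp (-‖x‖ ^ 2 / 2))) =
      stdGaussian E := by
  have := isFiniteMeasure_withDensity_ofReal (integrable_exp_neg_sq_norm (E := E)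
    |>.const_mul ((2 * Real.pi) ^ (-(Module.finrank ℝ E : ℝ) / 2))).hasFiniteIntegral
  refine Measure.ext_of_charFun (funext fun t ↦ ?_)
  rw [charFun_stdGaussian, charFun_apply,
    integral_withDensity_eq_integral_toReal_smul (by fun_prop) (by simp)]
  have hpi : (0 : ℝ) < 2 * Real.pi := by positivity
  have hpos (x : E) :
      0 ≤ (2 * Real.pi) ^ (-(Module.finrank ℝ E : ℝ) / 2) * Real.exp (-‖x‖ ^ 2 / 2) := by
    positivity
  simp only [ENNReal.toReal_ofReal (hpos _), mul_smul, integral_smul,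
    integral_exp_neg_sq_norm_smul_cexp_inner]
  rw [Complex.real_smul, ← mul_assoc, ← Complex.ofReal_mul, ← Real.rpow_add hpi, neg_div,
    neg_add_cancel, Real.rpow_zero, Complex.ofReal_one, one_mul]

theorem gauss_eq_stdGaussian (n : ℕ) : gauss n = stdGaussian (En n) := by
  rw [← withDensity_eq_stdGaussian, finrank_euclideanSpace_fin, gauss]

instance isNegInvariant_stdGaussian : (stdGaussian E).IsNegInvariant where
  neg_eq_self := stdGaussian_map (LinearIsometryEquiv.neg ℝ)

theorem integral_inner_mul_inner_stdGaussian (u v : E) :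
    ∫ x, ⟪u, x⟫ * ⟪v, x⟫ ∂stdGaussian E = ⟪u, v⟫ := by
  have h := covarianceBilin_apply_eq_cov (μ := stdGaussian E) IsGaussian.memLp_two_id u v
  have hmean (w : E) : ∫ x, ⟪w, x⟫ ∂stdGaussian E = 0 :=
    integral_strongDual_stdGaussian (innerSL ℝ w)
  rw [covarianceBilin_stdGaussian, covariance, hmean, hmean] at h
  simp only [sub_zero] at h
  exact h.symm

end StdGaussian

/-! ### Families of polynomial growth in the noise -/

section PolynomialBounds

variable {ι E X Y Z : Type*} [NormedAddCommGroup E] [NormedAddCommGroup X]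
  [NormedAddCommGroup Y] [NormedAddCommGroup Z]

/-- Finiteness of all polynomial moments of `μ`, in the form in which remainders are dominated. -/
def HasPolynomialMoments [MeasurableSpace E] (μ : Measure E) : Prop :=
  ∀ m : ℕ, Integrable (fun x ↦ (1 + ‖x‖) ^ m) μ

theorem hasPolynomialMoments_of_isGaussian [NormedSpace ℝ E] [CompleteSpace E]
    [SecondCountableTopology E] [MeasurableSpace E] [BorelSpace E] (μ : Measure E) [IsGaussian μ] :
    HasPolynomialMoments μ := fun m ↦ by
  have hid : MemLp (fun x : E ↦ x) m μ := IsGaussian.memLp_id μ m (ENNReal.natCast_ne_top m)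
  have hadd : MemLp (fun x : E ↦ 1 + ‖x‖) m μ := (memLp_const (1 : ℝ)).add hid.norm
  refine hadd.integrable_norm_pow'.congr (.of_forall fun x ↦ ?_)
  simp only [Real.norm_of_nonneg (by positivity : 0 ≤ 1 + ‖x‖)]

/-- `PolyBigO s k F` says that `F i x = O(s i ^ k)` uniformly in the parameter `i`, up to a factor
of polynomial growth in the noise `x`. All remainders of the expansion are of this form. -/
def PolyBigO (s : ι → ℝ) (k : ℕ) (F : ι → E → X) : Prop :=
  ∃ m : ℕ, (fun p : ι × E ↦ F p.1 p.2) =O[⊤] fun p ↦ s p.1 ^ k * (1 + ‖p.2‖) ^ m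

namespace PolyBigO

variable {s : ι → ℝ} {k l : ℕ} {F F' : ι → E → X} {G : ι → E → Y} {a b : ι → E → ℝ}

theorem trans_isBigO (hF : PolyBigO s k F)
    (h : (fun p : ι × E ↦ G p.1 p.2) =O[⊤] fun p ↦ F p.1 p.2) : PolyBigO s k G :=
  let ⟨m, hm⟩ := hF
  ⟨m, h.trans hm⟩

theorem of_norm_le (ha : PolyBigO s k a) (h : ∀ i x, ‖F i x‖ ≤ a i x) : PolyBigO s k F :=
  ha.trans_isBigO (.of_norm_le fun p ↦ h p.1 p.2)

theorem of_isBigO {c : ι → X} (hc : c =O[⊤] fun i ↦ s i ^ k) : PolyBigO s k fun i (_ : E) ↦ c i :=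
  ⟨0, by simpa only [pow_zero, mul_one] using!
    hc.comp_tendsto (k := fun p : ι × E ↦ p.1) tendsto_top⟩

theorem noise : PolyBigO s 0 fun _ (x : E) ↦ x :=
  ⟨1, .of_norm_le fun p ↦ by simp⟩

theorem congr (hF : PolyBigO s k F) (h : ∀ i x, F i x = F' i x) : PolyBigO s k F' :=
  hF.trans_isBigO ((isBigO_refl _ _).congr_left fun p ↦ h p.1 p.2)

theorem norm (hF : PolyBigO s k F) : PolyBigO s k fun i x ↦ ‖F i x‖ :=
  hF.trans_isBigO (isBigO_refl _ _).norm_left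

theorem eventually (hF : PolyBigO s k F) : ∀ᶠ m in atTop,
    (fun p : ι × E ↦ F p.1 p.2) =O[⊤] fun p ↦ s p.1 ^ k * (1 + ‖p.2‖) ^ m := by
  obtain ⟨m, hm⟩ := hF
  filter_upwards [eventually_ge_atTop m] with m' hmm'
  refine hm.trans (IsBigO.mul (isBigO_refl _ _) (.of_norm_le fun p ↦ ?_))
  rw [Real.norm_of_nonneg (by positivity)]
  exact pow_le_pow_right₀ (by simp) hmm'

theorem add (hF : PolyBigO s k F) (hF' : PolyBigO s k F') :
    PolyBigO s k fun i x ↦ F i x + F' i x :=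
  let ⟨m, hm, hm'⟩ := (hF.eventually.and hF'.eventually).exists
  ⟨m, hm.add hm'⟩

theorem sub (hF : PolyBigO s k F) (hF' : PolyBigO s k F') :
    PolyBigO s k fun i x ↦ F i x - F' i x :=
  let ⟨m, hm, hm'⟩ := (hF.eventually.and hF'.eventually).exists
  ⟨m, hm.sub hm'⟩

theorem smul [NormedSpace ℝ X] (ha : PolyBigO s k a) (hF : PolyBigO s l F) :
    PolyBigO s (k + l) fun i x ↦ a i x • F i x :=
  let ⟨m, hm⟩ := ha
  let ⟨m', hm'⟩ := hF
  ⟨m + m', (hm.smul hm').congr_right fun p ↦ by rw [smul_eq_mul]; ring⟩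

theorem mul (ha : PolyBigO s k a) (hb : PolyBigO s l b) :
    PolyBigO s (k + l) fun i x ↦ a i x * b i x :=
  ha.smul hb

theorem const_mul (ha : PolyBigO s k a) (c : ℝ) : PolyBigO s k fun i x ↦ c * a i x :=
  ha.trans_isBigO (isBigO_const_mul_self _ _ _)

theorem pow (ha : PolyBigO s k a) (j : ℕ) : PolyBigO s (k * j) fun i x ↦ a i x ^ j :=
  let ⟨m, hm⟩ := ha
  ⟨m * j, (hm.pow j).congr_right fun p ↦ by ring⟩

theorem clm [NormedSpace ℝ X] [NormedSpace ℝ Y] (hF : PolyBigO s k F) (A : X →L[ℝ] Y) :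
    PolyBigO s k fun i x ↦ A (F i x) :=
  hF.trans_isBigO (A.isBigO_comp _ _)

theorem clm₂ [NormedSpace ℝ X] [NormedSpace ℝ Y] [NormedSpace ℝ Z] (hF : PolyBigO s k F)
    (hG : PolyBigO s l G) (A : X →L[ℝ] Y →L[ℝ] Z) :
    PolyBigO s (k + l) fun i x ↦ A (F i x) (G i x) :=
  (hF.norm.mul hG.norm).trans_isBigO A.isBoundedBilinearMap.isBigO_comp

theorem mono (hF : PolyBigO s l F) (hkl : k ≤ l) (hs : s =O[⊤] fun _ ↦ (1 : ℝ)) :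
    PolyBigO s k F := by
  obtain ⟨m, hm⟩ := hF
  have hpow : (fun p : ι × E ↦ s p.1 ^ (l - k)) =O[⊤] fun _ ↦ (1 : ℝ) := by
    simpa only [one_pow, Function.comp_def] using
      (hs.comp_tendsto (k := fun p : ι × E ↦ p.1) tendsto_top).pow (l - k)
  refine ⟨m, hm.trans ?_⟩
  refine ((isBigO_refl (fun p : ι × E ↦ s p.1 ^ k * (1 + ‖p.2‖) ^ m) ⊤).mul hpow).congr
    (fun p ↦ ?_) fun p ↦ mul_one _
  rw [mul_right_comm, ← pow_add, Nat.add_sub_cancel' hkl]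

theorem mul_of_one_sub (hb : PolyBigO s k b) (ha : PolyBigO s l fun i x ↦ 1 - a i x)
    (hs : s =O[⊤] fun _ ↦ (1 : ℝ)) : PolyBigO s k fun i x ↦ a i x * b i x :=
  (hb.sub ((ha.mul hb).mono (Nat.le_add_left k l) hs)).congr fun i x ↦ by ring

theorem comp_isBigO {φ : X → Y} {j m : ℕ} (hF : PolyBigO s 1 F) (hs : s =O[⊤] fun _ ↦ (1 : ℝ))
    (hφ : φ =O[⊤] fun y ↦ ‖y‖ ^ j * (1 + ‖y‖) ^ m) : PolyBigO s j fun i x ↦ φ (F i x) := by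
  have hone : PolyBigO s 0 fun i x ↦ 1 + ‖F i x‖ :=
    .add (.of_isBigO (by simpa only [pow_zero] using isBigO_refl (fun _ : ι ↦ (1 : ℝ)) ⊤))
      (hF.norm.mono zero_le_one hs)
  have hbound : PolyBigO s j fun i x ↦ ‖F i x‖ ^ j * (1 + ‖F i x‖) ^ m := by
    simpa only [one_mul, zero_mul, add_zero] using (hF.norm.pow j).mul (hone.pow m)
  exact hbound.trans_isBigO (hφ.comp_tendsto (k := fun p : ι × E ↦ F p.1 p.2) tendsto_top)

theorem exists_norm_le (hF : PolyBigO s k F) :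
    ∃ C, ∃ m : ℕ, ∀ i x, ‖F i x‖ ≤ C * ‖s i ^ k‖ * (1 + ‖x‖) ^ m := by
  obtain ⟨m, hm⟩ := hF
  obtain ⟨C, hC⟩ := isBigO_top.1 hm
  refine ⟨C, m, fun i x ↦ (hC (i, x)).trans_eq ?_⟩
  rw [norm_mul, Real.norm_of_nonneg (by positivity : 0 ≤ (1 + ‖x‖) ^ m), mul_assoc]

variable [MeasurableSpace E] {μ : Measure E}

theorem integrable [OpensMeasurableSpace E] [SecondCountableTopologyEither E X]
    (hF : PolyBigO s k F) (hμ : HasPolynomialMoments μ) {i : ι} (hFi : Continuous (F i)) :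
    Integrable (F i) μ := by
  obtain ⟨C, m, hC⟩ := hF.exists_norm_le
  exact ((hμ m).const_mul _).mono' hFi.aestronglyMeasurable (.of_forall (hC i))

theorem isBigO_integral [NormedSpace ℝ X] (hF : PolyBigO s k F) (hμ : HasPolynomialMoments μ) :
    (fun i ↦ ∫ x, F i x ∂μ) =O[⊤] fun i ↦ s i ^ k := by
  obtain ⟨C, m, hC⟩ := hF.exists_norm_le
  refine isBigO_top.2 ⟨C * ∫ x, (1 + ‖x‖) ^ m ∂μ, fun i ↦ ?_⟩
  calc ‖∫ x, F i x ∂μ‖ ≤ ∫ x, C * ‖s i ^ k‖ * (1 + ‖x‖) ^ m ∂μ :=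
        norm_integral_le_of_norm_le ((hμ m).const_mul _) (.of_forall (hC i))
    _ = C * (∫ x, (1 + ‖x‖) ^ m ∂μ) * ‖s i ^ k‖ := by rw [integral_const_mul]; ring

end PolyBigO

end PolynomialBounds

/-! ### Taylor expansion with a remainder of polynomial growth -/

section Growth

variable {ι E X : Type*} [NormedAddCommGroup X] {F : E → X}

theorem exists_isBigO_one_add_norm_pow [NormedAddCommGroup E]
    (hF : ∃ C, ∃ m : ℕ, ∀ x, ‖F x‖ ≤ C * (1 + ‖x‖) ^ m) :
    ∃ m : ℕ, F =O[⊤] fun x ↦ (1 + ‖x‖) ^ m :=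
  let ⟨C, m, hC⟩ := hF
  ⟨m, isBigO_top.2 ⟨C, fun x ↦ by rw [Real.norm_of_nonneg (by positivity)]; exact hC x⟩⟩

theorem isBigO_one_comp_of_norm_le {B : ℝ} (hB : ∀ x, ‖F x‖ ≤ B) (q : ι → E) :
    (fun i ↦ F (q i)) =O[⊤] fun _ ↦ (1 : ℝ) :=
  isBigO_top.2 ⟨B, fun i ↦ by simpa only [norm_one, mul_one] using hB (q i)⟩

end Growth

section Taylor

variable {X Y : Type*} [NormedAddCommGroup X] [NormedSpace ℝ X] [NormedAddCommGroup Y]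
  [NormedSpace ℝ Y] {m n : ℕ}

theorem isBigO_taylor_remainder [CompleteSpace Y] {f : X → Y} (hf : ContDiff ℝ (n + 1) f)
    (hfm : iteratedFDeriv ℝ (n + 1) f =O[⊤] fun x ↦ (1 + ‖x‖) ^ m) :
    (fun x ↦ f x - ∑ k ∈ Finset.range (n + 1),
      (k.factorial : ℝ)⁻¹ • iteratedFDeriv ℝ k f 0 (fun _ ↦ x)) =O[⊤]
      fun x ↦ ‖x‖ ^ (n + 1) * (1 + ‖x‖) ^ m := by
  obtain ⟨C, hC0, hC⟩ := hfm.exists_nonneg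
  rw [isBigOWith_top] at hC
  refine isBigO_top.2 ⟨(n.factorial : ℝ)⁻¹ * C, fun x ↦ ?_⟩
  have htaylor := map_add_eq_sum_add_integral_iteratedFDeriv (x := 0) (y := x) (n := n)
    fun t _ ↦ hf.contDiffAt
  simp only [zero_add] at htaylor
  have hbound : ∀ t ∈ Set.uIoc (0 : ℝ) 1,
      ‖(1 - t) ^ n • iteratedFDeriv ℝ (n + 1) f (t • x) fun _ ↦ x‖ ≤
        C * (1 + ‖x‖) ^ m * ‖x‖ ^ (n + 1) := fun t ht ↦ by
    obtain ⟨ht0, ht1⟩ := (Set.uIoc_of_le (zero_le_one' ℝ)).subset ht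
    have htx : ‖t • x‖ ≤ ‖x‖ := by
      rw [norm_smul, Real.norm_of_nonneg ht0.le]
      exact mul_le_of_le_one_left (norm_nonneg x) ht1
    calc ‖(1 - t) ^ n • iteratedFDeriv ℝ (n + 1) f (t • x) fun _ ↦ x‖
        ≤ 1 * (‖iteratedFDeriv ℝ (n + 1) f (t • x)‖ * ‖x‖ ^ (n + 1)) := by
          rw [norm_smul, norm_pow, Real.norm_of_nonneg (sub_nonneg.2 ht1)]
          gcongr
          · exact pow_le_one₀ (sub_nonneg.2 ht1) (sub_le_self 1 ht0.le)
          · simpa only [Finset.prod_const, Finset.card_fin] using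
              (iteratedFDeriv ℝ (n + 1) f (t • x)).le_opNorm fun _ ↦ x
      _ ≤ C * (1 + ‖x‖) ^ m * ‖x‖ ^ (n + 1) := by
          rw [one_mul]
          gcongr
          refine (hC (t • x)).trans ?_
          rw [Real.norm_of_nonneg (by positivity)]
          gcongr
  rw [htaylor, add_sub_cancel_left, norm_smul, norm_inv, Real.norm_natCast, mul_assoc]
  gcongr
  refine (intervalIntegral.norm_integral_le_of_norm_le_const hbound).trans_eq ?_
  rw [sub_zero, abs_one, mul_one, Real.norm_of_nonneg (by positivity), mul_assoc, mul_comm (_ ^ m)]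

theorem isBigO_quadratic_remainder {f : X → ℝ} (hf : ContDiff ℝ 3 f)
    (hfm : iteratedFDeriv ℝ 3 f =O[⊤] fun x ↦ (1 + ‖x‖) ^ m) :
    (fun x ↦ f x - f 0 - (fderiv ℝ f 0 x + 2⁻¹ * fderiv ℝ (fderiv ℝ f) 0 x x)) =O[⊤]
      fun x ↦ ‖x‖ ^ 3 * (1 + ‖x‖) ^ m :=
  (isBigO_taylor_remainder (n := 2) hf hfm).congr_left fun x ↦ by
    simp only [Finset.sum_range_succ, Finset.sum_range_zero, iteratedFDeriv_zero_apply,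
      iteratedFDeriv_one_apply, iteratedFDeriv_two_apply, Nat.factorial, smul_eq_mul]
    norm_num
    ring

end Taylor

/-! ### Expansions with terms of alternating parity -/

section Parity

variable {ι E : Type*} [NormedAddCommGroup E] {s : ι → ℝ}

/-- The expansion `W = W₁ + W₂ + O(s³)` of a family of random variables, in which the term
`W₁ = O(s)` is odd and the term `W₂ = O(s²)` is even in the noise. -/
structure HasParityExpansion (s : ι → ℝ) (W W₁ W₂ : ι → E → ℝ) : Prop where
  continuous : ∀ i, Continuous (W i)
  continuous_fst : ∀ i, Continuous (W₁ i)
  continuous_snd : ∀ i, Continuous (W₂ i)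
  odd_fst : ∀ i, (W₁ i).Odd
  even_snd : ∀ i, (W₂ i).Even
  polyBigO_fst : PolyBigO s 1 W₁
  polyBigO_snd : PolyBigO s 2 W₂
  polyBigO_remainder : PolyBigO s 3 fun i x ↦ W i x - W₁ i x - W₂ i x

namespace HasParityExpansion

variable {W W₁ W₂ : ι → E → ℝ}

theorem polyBigO_sub_fst (hW : HasParityExpansion s W W₁ W₂) (hs : s =O[⊤] fun _ ↦ (1 : ℝ)) :
    PolyBigO s 2 fun i x ↦ W i x - W₁ i x :=
  ((hW.polyBigO_remainder.mono (by norm_num) hs).add hW.polyBigO_snd).congr fun _ _ ↦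
    sub_add_cancel _ _

theorem polyBigO (hW : HasParityExpansion s W W₁ W₂) (hs : s =O[⊤] fun _ ↦ (1 : ℝ)) :
    PolyBigO s 1 W :=
  (((hW.polyBigO_sub_fst hs).mono one_le_two hs).add hW.polyBigO_fst).congr fun _ _ ↦
    sub_add_cancel _ _

end HasParityExpansion

variable [MeasurableSpace E] [BorelSpace E] {μ : Measure E} [μ.IsNegInvariant]

theorem integral_eq_zero_of_odd {X : Type*} [NormedAddCommGroup X] [NormedSpace ℝ X] {F : E → X}
    (hF : F.Odd) : ∫ x, F x ∂μ = 0 := by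
  have : IsAddTorsionFree X := .of_isTorsionFree ℝ X
  rw [← self_eq_neg, ← integral_neg, ← integral_neg_eq_self]
  exact integral_congr_ae (.of_forall hF)

theorem PolyBigO.isBigO_integral_of_sub_odd {k : ℕ} {F O : ι → E → ℝ}
    (h : PolyBigO s k fun i x ↦ F i x - O i x) (hμ : HasPolynomialMoments μ)
    (hF : ∀ i, Integrable (F i) μ) (hO : ∀ i, Integrable (O i) μ) (hodd : ∀ i, (O i).Odd) :
    (fun i ↦ ∫ x, F i x ∂μ) =O[⊤] fun i ↦ s i ^ k :=
  (h.isBigO_integral hμ).congr_left fun i ↦ by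
    rw [integral_sub (hF i) (hO i), integral_eq_zero_of_odd (hodd i), sub_zero]

namespace HasParityExpansion

variable {W W₁ W₂ Z Z₁ Z₂ r : ι → E → ℝ}

theorem isBigO_integral_accept (hW : HasParityExpansion s W W₁ W₂) (hμ : HasPolynomialMoments μ)
    (hs : s =O[⊤] fun _ ↦ (1 : ℝ)) (hr : ∀ i, Continuous (r i))
    (hr' : PolyBigO s 2 fun i x ↦ 1 - r i x) :
    (fun i ↦ ∫ x, r i x * W i x ∂μ) =O[⊤] fun i ↦ s i ^ 2 := by
  have hrW : PolyBigO s 2 fun i x ↦ r i x * W i x - W₁ i x :=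
    ((hW.polyBigO_sub_fst hs).sub ((hr'.mul (hW.polyBigO hs)).mono (by norm_num) hs)).congr
      fun i x ↦ by ring
  exact hrW.isBigO_integral_of_sub_odd hμ
    (fun i ↦ ((hW.polyBigO hs).mul_of_one_sub hr' hs).integrable hμ ((hr i).mul (hW.continuous i)))
    (fun i ↦ hW.polyBigO_fst.integrable hμ (hW.continuous_fst i)) hW.odd_fst

theorem isBigO_integral_accept_mul (hW : HasParityExpansion s W W₁ W₂)
    (hZ : HasParityExpansion s Z Z₁ Z₂) (hμ : HasPolynomialMoments μ)
    (hs : s =O[⊤] fun _ ↦ (1 : ℝ)) (hr : ∀ i, Continuous (r i))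
    (hr' : PolyBigO s 2 fun i x ↦ 1 - r i x) :
    (fun i ↦ ∫ x, r i x * (W i x * Z i x) ∂μ - ∫ x, W₁ i x * Z₁ i x ∂μ) =O[⊤]
      fun i ↦ s i ^ 4 := by
  have hWZ := (hW.polyBigO hs).mul (hZ.polyBigO hs)
  have hW₁Z₁ := hW.polyBigO_fst.mul hZ.polyBigO_fst
  have hcross := (hW.polyBigO_fst.mul hZ.polyBigO_snd).add (hW.polyBigO_snd.mul hZ.polyBigO_fst)
  have hrem : PolyBigO s 4 fun i x ↦ r i x * (W i x * Z i x) - W₁ i x * Z₁ i x -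
      (W₁ i x * Z₂ i x + W₂ i x * Z₁ i x) :=
    (((hW.polyBigO_fst.mul hZ.polyBigO_remainder).add
      (hW.polyBigO_snd.mul (hZ.polyBigO_sub_fst hs))).add
      (hW.polyBigO_remainder.mul (hZ.polyBigO hs)) |>.sub (hr'.mul hWZ)).congr fun i x ↦ by ring
  have hint_acc (i) : Integrable (fun x ↦ r i x * (W i x * Z i x)) μ :=
    (hWZ.mul_of_one_sub hr' hs).integrable hμ
      ((hr i).mul ((hW.continuous i).mul (hZ.continuous i)))
  have hint_fst (i) : Integrable (fun x ↦ W₁ i x * Z₁ i x) μ :=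
    hW₁Z₁.integrable hμ ((hW.continuous_fst i).mul (hZ.continuous_fst i))
  refine (hrem.isBigO_integral_of_sub_odd hμ (fun i ↦ (hint_acc i).sub (hint_fst i)) (fun i ↦ ?_)
    fun i ↦ ?_).congr_left fun i ↦ integral_sub (hint_acc i) (hint_fst i)
  · exact hcross.integrable hμ (((hW.continuous_fst i).mul (hZ.continuous_snd i)).add
      ((hW.continuous_snd i).mul (hZ.continuous_fst i)))
  · exact ((hW.odd_fst i).mul_even (hZ.even_snd i)).add ((hW.even_snd i).mul_odd (hZ.odd_fst i))

theorem isBigO_covariance_accept (hW : HasParityExpansion s W W₁ W₂)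
    (hZ : HasParityExpansion s Z Z₁ Z₂) (hμ : HasPolynomialMoments μ)
    (hs : s =O[⊤] fun _ ↦ (1 : ℝ)) (hr : ∀ i, Continuous (r i))
    (hr' : PolyBigO s 2 fun i x ↦ 1 - r i x) :
    (fun i ↦ ∫ x, r i x * (W i x * Z i x) ∂μ -
      (∫ x, r i x * W i x ∂μ) * (∫ x, r i x * Z i x ∂μ) - ∫ x, W₁ i x * Z₁ i x ∂μ) =O[⊤]
      fun i ↦ s i ^ 4 := by
  have hmeans := (hW.isBigO_integral_accept hμ hs hr hr').mul
    (hZ.isBigO_integral_accept hμ hs hr hr')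
  simp only [← pow_add] at hmeans
  exact ((hW.isBigO_integral_accept_mul hZ hμ hs hr hr').sub hmeans).congr_left fun i ↦ by ring

end HasParityExpansion

end Parity

/-! ### The unadjusted Langevin increment -/

section Increment

variable {ι E : Type*} [NormedAddCommGroup E] [InnerProductSpace ℝ E]

/-- The unadjusted Langevin increment with noise `x` and drift `-a` over the time step `s² / 2`;
in terms of the time step `Δt` of the theorem, `s = √(2Δt)`. -/
def langevinIncrement (s : ℝ) (a x : E) : E := s • x - (s ^ 2 / 2) • a

variable {s : ι → ℝ} {a : ι → E}

theorem continuous_langevinIncrement (s : ℝ) (a : E) : Continuous (langevinIncrement s a) :=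
  (continuous_const_smul s).sub continuous_const

theorem polyBigO_smul_noise : PolyBigO s 1 fun i (x : E) ↦ s i • x :=
  (PolyBigO.of_isBigO (by simpa only [pow_one] using isBigO_refl s ⊤)).smul .noise

theorem polyBigO_smul_drift (ha : a =O[⊤] fun _ ↦ (1 : ℝ)) :
    PolyBigO s 2 fun i (_ : E) ↦ (s i ^ 2 / 2) • a i := by
  refine .of_isBigO ?_
  have hs : (fun i ↦ s i ^ 2 / 2) =O[⊤] fun i ↦ s i ^ 2 := .of_norm_le fun i ↦ by
    rw [Real.norm_of_nonneg (by positivity)]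
    exact half_le_self (sq_nonneg _)
  simpa only [smul_eq_mul, mul_one] using hs.smul ha

theorem polyBigO_langevinIncrement (hs : s =O[⊤] fun _ ↦ (1 : ℝ)) (ha : a =O[⊤] fun _ ↦ (1 : ℝ)) :
    PolyBigO s 1 fun i ↦ langevinIncrement (s i) (a i) :=
  polyBigO_smul_noise.sub ((polyBigO_smul_drift ha).mono one_le_two hs)

/-- The part of the second-order Taylor polynomial of `f` along the increment that is even in the
noise, to order `s²`. -/
def evenTerm (f : E → ℝ) (s : ℝ) (a x : E) : ℝ :=
  2⁻¹ * fderiv ℝ (fderiv ℝ f) 0 (s • x) (s • x) - fderiv ℝ f 0 ((s ^ 2 / 2) • a)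

theorem polyBigO_taylor_sub_terms (f : E → ℝ) (hs : s =O[⊤] fun _ ↦ (1 : ℝ))
    (ha : a =O[⊤] fun _ ↦ (1 : ℝ)) :
    PolyBigO s 3 fun i x ↦ fderiv ℝ f 0 (langevinIncrement (s i) (a i) x) +
      2⁻¹ * fderiv ℝ (fderiv ℝ f) 0 (langevinIncrement (s i) (a i) x)
        (langevinIncrement (s i) (a i) x) -
      fderiv ℝ f 0 (s i • x) - evenTerm f (s i) (a i) x := by
  have hd := polyBigO_langevinIncrement hs ha
  have hcross := ((hd.clm₂ (polyBigO_smul_drift ha) (fderiv ℝ (fderiv ℝ f) 0)).add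
    ((polyBigO_smul_drift ha).clm₂ polyBigO_smul_noise (fderiv ℝ (fderiv ℝ f) 0))).const_mul (-2⁻¹)
  refine hcross.congr fun i x ↦ ?_
  simp only [langevinIncrement, map_sub, map_smul, sub_apply, smul_apply, smul_eq_mul, neg_mul,
    evenTerm]
  ring

theorem hasParityExpansion_langevinIncrement {f : E → ℝ} (hf : ContDiff ℝ 3 f) {m : ℕ}
    (hfm : iteratedFDeriv ℝ 3 f =O[⊤] fun x ↦ (1 + ‖x‖) ^ m) (hs : s =O[⊤] fun _ ↦ (1 : ℝ))
    (ha : a =O[⊤] fun _ ↦ (1 : ℝ)) :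
    HasParityExpansion s (fun i x ↦ f (langevinIncrement (s i) (a i) x) - f 0)
      (fun i x ↦ fderiv ℝ f 0 (s i • x)) (fun i ↦ evenTerm f (s i) (a i)) where
  continuous i := (hf.continuous.comp (continuous_langevinIncrement _ _)).sub continuous_const
  continuous_fst i := by fun_prop
  continuous_snd i := by unfold evenTerm; fun_prop
  odd_fst i x := by simp only [smul_neg, map_neg]
  even_snd i x := by simp only [evenTerm, smul_neg, map_neg, neg_apply, neg_neg]
  polyBigO_fst := polyBigO_smul_noise.clm _
  polyBigO_snd := ((polyBigO_smul_noise.clm₂ polyBigO_smul_noise _).const_mul _).sub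
    ((polyBigO_smul_drift ha).clm _)
  polyBigO_remainder :=
    (((polyBigO_langevinIncrement hs ha).comp_isBigO hs (isBigO_quadratic_remainder hf hfm)).add
      (polyBigO_taylor_sub_terms f hs ha)).congr fun i x ↦ by ring

theorem integral_fderiv_smul_mul_stdGaussian [FiniteDimensional ℝ E] [MeasurableSpace E]
    [BorelSpace E] (f g : E → ℝ) (y : E) (s : ℝ) :
    ∫ x, fderiv ℝ f y (s • x) * fderiv ℝ g y (s • x) ∂stdGaussian E =
      s ^ 2 * ⟪gradient f y, gradient g y⟫ := by
  rw [← integral_inner_mul_inner_stdGaussian, ← integral_const_mul]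
  congr 1 with x
  simp only [map_smul, smul_eq_mul, inner_gradient_left]
  ring

end Increment

/-! ### The acceptance probability -/

section Acceptance

theorem norm_add_smul_sq {E : Type*} [NormedAddCommGroup E] [InnerProductSpace ℝ E]
    (v u : E) (dt : ℝ) :
    ‖v + dt • u‖ ^ 2 = ‖v‖ ^ 2 + 2 * dt * ⟪u, v⟫ + dt ^ 2 * ‖u‖ ^ 2 := by
  rw [norm_add_sq_real, norm_smul, mul_pow, Real.norm_eq_abs, sq_abs, real_inner_smul_right,
    real_inner_comm]
  ring

section Hilbert

variable {E : Type*} [NormedAddCommGroup E] [InnerProductSpace ℝ E] [CompleteSpace E]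
  {V : E → ℝ} {K : NNReal} {B dt : ℝ}

/-- The logarithm of the Metropolis ratio of the Langevin proposal: the error of the trapezoidal
rule for `∇V` between `q` and `q'`, plus a term of the order of the time step. -/
def logMetropolisRatio (V : E → ℝ) (dt : ℝ) (q q' : E) : ℝ :=
  V q - V q' + 2⁻¹ * ⟪gradient V q + gradient V q', q' - q⟫ +
    dt / 4 * (‖gradient V q‖ ^ 2 - ‖gradient V q'‖ ^ 2)

theorem abs_trapezoid_error_le (hV : Differentiable ℝ V) (hK : LipschitzWith K (gradient V))
    (q q' : E) :
    |V q' - V q - 2⁻¹ * ⟪gradient V q + gradient V q', q' - q⟫| ≤ K / 2 * ‖q' - q‖ ^ 2 := by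
  have hmean : ∀ x ∈ segment ℝ q q',
      ‖gradient V x - (2⁻¹ : ℝ) • (gradient V q + gradient V q')‖ ≤ K / 2 * ‖q' - q‖ := by
    intro x hx
    have hsplit : gradient V x - (2⁻¹ : ℝ) • (gradient V q + gradient V q') =
        (2⁻¹ : ℝ) • ((gradient V x - gradient V q) + (gradient V x - gradient V q')) := by
      module
    calc ‖gradient V x - (2⁻¹ : ℝ) • (gradient V q + gradient V q')‖
        ≤ 2⁻¹ * (‖gradient V x - gradient V q‖ + ‖gradient V x - gradient V q'‖) := by
          rw [hsplit, norm_smul, Real.norm_of_nonneg (by positivity)]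
          gcongr
          exact norm_add_le _ _
      _ ≤ 2⁻¹ * (K * dist q x + K * dist x q') := by
          rw [← dist_eq_norm, ← dist_eq_norm, dist_comm q x]
          gcongr <;> exact hK.dist_le_mul _ _
      _ = K / 2 * ‖q' - q‖ := by
          rw [← mul_add, dist_add_dist_of_mem_segment hx, dist_comm, dist_eq_norm]
          ring
  have hmvt := (convex_segment q q').norm_image_sub_le_of_norm_fderiv_le' (C := K / 2 * ‖q' - q‖)
    (φ := innerSL ℝ ((2⁻¹ : ℝ) • (gradient V q + gradient V q'))) (fun x _ ↦ hV x)
    (fun x hx ↦ ?_) (left_mem_segment ℝ q q') (right_mem_segment ℝ q q')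
  · simpa only [sq, mul_assoc, real_inner_smul_left, innerSL_apply_apply, Real.norm_eq_abs] using
      hmvt
  · refine (le_of_eq ?_).trans (hmean x hx)
    rw [← (InnerProductSpace.toDual ℝ E).norm_map, map_sub, toDual_gradient]
    rfl

theorem abs_logMetropolisRatio_le (hV : Differentiable ℝ V) (hK : LipschitzWith K (gradient V))
    (hB : ∀ q, ‖gradient V q‖ ≤ B) (hdt : 0 ≤ dt) (q q' : E) :
    |logMetropolisRatio V dt q q'| ≤ K / 2 * ‖q' - q‖ ^ 2 + dt / 4 * B ^ 2 := by
  have hsq (x : E) : ‖gradient V x‖ ^ 2 ≤ B ^ 2 := by gcongr; exact hB x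
  have hgrad : |‖gradient V q‖ ^ 2 - ‖gradient V q'‖ ^ 2| ≤ B ^ 2 :=
    abs_sub_le_of_nonneg_of_le (sq_nonneg _) (hsq q) (sq_nonneg _) (hsq q')
  calc |logMetropolisRatio V dt q q'|
      ≤ |V q - V q' + 2⁻¹ * ⟪gradient V q + gradient V q', q' - q⟫| +
        |dt / 4 * (‖gradient V q‖ ^ 2 - ‖gradient V q'‖ ^ 2)| := abs_add_le _ _
    _ ≤ K / 2 * ‖q' - q‖ ^ 2 + dt / 4 * B ^ 2 := by
        rw [abs_mul, abs_of_nonneg (by positivity : 0 ≤ dt / 4), ← abs_neg, neg_add', neg_sub]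
        gcongr
        exact abs_trapezoid_error_le hV hK q q'

theorem abs_one_sub_min_one_exp_le (α : ℝ) : |1 - min 1 (Real.exp α)| ≤ |α| := by
  rw [abs_of_nonneg (sub_nonneg.2 (min_le_left _ _)), sub_le_comm, le_min_iff]
  exact ⟨by linarith [abs_nonneg α], by linarith [neg_abs_le α, Real.add_one_le_exp α]⟩

theorem continuous_logMetropolisRatio (hV : Continuous V) (hV' : Continuous (gradient V)) (dt : ℝ)
    (q : E) : Continuous (logMetropolisRatio V dt q) := by
  unfold logMetropolisRatio
  fun_prop

end Hilbert

variable {n : ℕ} {V : En n → ℝ} {dt : ℝ}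

theorem Rk_eq_min_exp (hdt : 0 < dt) (q q' : En n) :
    Rk V dt q q' = min 1 (Real.exp (logMetropolisRatio V dt q q')) := by
  have hp : (4 * Real.pi * dt) ^ (-(n : ℝ) / 2) ≠ 0 := by positivity
  unfold Rk Tker logMetropolisRatio
  congr 1
  rw [mul_left_comm, mul_left_comm (Real.exp (-V q)), mul_div_mul_left _ _ hp, ← Real.exp_add,
    ← Real.exp_add, ← Real.exp_sub, norm_add_smul_sq, norm_add_smul_sq, norm_sub_rev,
    ← neg_sub q' q, inner_neg_right, inner_add_left]
  congr 1
  field_simp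
  ring

theorem propMove_eq_add_langevinIncrement (hdt : 0 ≤ dt) (q x : En n) :
    propMove V dt q x = q + langevinIncrement √(2 * dt) (gradient V q) x := by
  rw [propMove, langevinIncrement, Real.sq_sqrt (by positivity), mul_div_cancel_left₀ _ two_ne_zero]
  abel

/-- The acceptance probability of the proposal from `q` as a function of its noise. -/
def acceptProb (V : En n → ℝ) (dt : ℝ) (q x : En n) : ℝ := Rk V dt q (propMove V dt q x)

theorem acceptProb_mem_Icc (hdt : 0 < dt) (q x : En n) : acceptProb V dt q x ∈ Set.Icc 0 1 := by
  rw [acceptProb, Rk_eq_min_exp hdt]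
  exact ⟨by positivity, min_le_left _ _⟩

theorem continuous_acceptProb (hV : Continuous V) (hV' : Continuous (gradient V)) (hdt : 0 < dt)
    (q : En n) : Continuous (acceptProb V dt q) := by
  unfold acceptProb
  simp only [Rk_eq_min_exp hdt, propMove_eq_add_langevinIncrement hdt.le]
  have hlog := continuous_logMetropolisRatio hV hV' dt q
  have hincr := continuous_langevinIncrement √(2 * dt) (gradient V q)
  fun_prop

theorem polyBigO_one_sub_acceptProb {ι : Type*} {dt : ι → ℝ} {q : ι → En n} {K : NNReal} {B : ℝ}
    (hV : Differentiable ℝ V) (hK : LipschitzWith K (gradient V)) (hB : ∀ q, ‖gradient V q‖ ≤ B)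
    (hdt : ∀ i, 0 < dt i) (hs : (fun i ↦ √(2 * dt i)) =O[⊤] fun _ ↦ (1 : ℝ)) :
    PolyBigO (fun i ↦ √(2 * dt i)) 2
      fun i x ↦ 1 - acceptProb V (dt i) (q i) x := by
  have ha := isBigO_one_comp_of_norm_le hB q
  have hstep : dt =O[⊤] fun i ↦ √(2 * dt i) ^ 2 := .of_norm_le fun i ↦ by
    rw [Real.norm_of_nonneg (hdt i).le, Real.sq_sqrt (by linarith [hdt i])]
    linarith [hdt i]
  have hbound := (((polyBigO_langevinIncrement hs ha).norm.pow 2).const_mul (K / 2)).add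
    (.of_isBigO (hstep.const_mul_left (B ^ 2 / 4)))
  refine hbound.of_norm_le fun i x ↦ ?_
  rw [acceptProb, Rk_eq_min_exp (hdt i), Real.norm_eq_abs]
  refine (abs_one_sub_min_one_exp_le _).trans <|
    (abs_logMetropolisRatio_le hV hK hB (hdt i).le _ _).trans_eq ?_
  rw [propMove_eq_add_langevinIncrement (hdt i).le, add_sub_cancel_left]
  ring

end Acceptance

/-! ### The covariance of the Metropolized increment -/

section Covariance

theorem integral_Icc_ite_le {X : Type*} [NormedAddCommGroup X] [NormedSpace ℝ X] [CompleteSpace X]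
    {r : ℝ} (hr : r ∈ Set.Icc (0 : ℝ) 1) (b c : X) :
    ∫ u in Set.Icc (0 : ℝ) 1, (if u ≤ r then b else c) = c + r • (b - c) := by
  have hinter : Set.Icc 0 1 ∩ Set.Iic r = Set.Icc 0 r := by
    rw [← Set.Ici_inter_Iic, Set.inter_assoc, Set.Iic_inter_Iic, min_eq_right hr.2,
      Set.Ici_inter_Iic]
  have hite (u : ℝ) : (if u ≤ r then b else c) = c + (Set.Iic r).indicator (fun _ ↦ b - c) u := by
    by_cases hu : u ≤ r <;> simp [hu]
  have hint : IntegrableOn ((Set.Iic r).indicator fun _ ↦ b - c) (Set.Icc 0 1) :=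
    (integrable_const _).indicator measurableSet_Iic
  simp only [hite]
  rw [integral_add (integrable_const _) hint, setIntegral_indicator measurableSet_Iic, hinter]
  simp [hr.1]

variable {n : ℕ} {V : En n → ℝ} {dt : ℝ} {f g : En n → ℝ} {q : En n}

theorem deltaInc_eq_ite (hdt : 0 ≤ dt) (q x : En n) (u : ℝ) :
    deltaInc V dt q x u =
      if u ≤ acceptProb V dt q x then langevinIncrement √(2 * dt) (gradient V q) x else 0 := by
  rw [deltaInc, langevinIncrement, Real.sq_sqrt (by positivity), mul_div_cancel_left₀ _ two_ne_zero,
    neg_smul, neg_add_eq_sub, acceptProb]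

/-- The amount by which an accepted proposal changes the observable `f`; a rejected one leaves it
at `f 0`. -/
def proposalChange (V : En n → ℝ) (dt : ℝ) (f : En n → ℝ) (q x : En n) : ℝ :=
  f (langevinIncrement √(2 * dt) (gradient V q) x) - f 0

theorem obsbar_eq (hdt : 0 < dt)
    (hf : Integrable (fun x ↦ acceptProb V dt q x * proposalChange V dt f q x)
      (stdGaussian (En n))) :
    obsbar V dt f q =
      f 0 + ∫ x, acceptProb V dt q x * proposalChange V dt f q x ∂stdGaussian (En n) := by
  unfold proposalChange at hf ⊢
  simp only [obsbar, deltaInc_eq_ite hdt.le, apply_ite f,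
    integral_Icc_ite_le (acceptProb_mem_Icc hdt q _), gauss_eq_stdGaussian, smul_eq_mul]
  rw [integral_add (integrable_const _) hf]
  simp

theorem obscov_eq (hdt : 0 < dt)
    (hf : Integrable (fun x ↦ acceptProb V dt q x * proposalChange V dt f q x)
      (stdGaussian (En n)))
    (hg : Integrable (fun x ↦ acceptProb V dt q x * proposalChange V dt g q x)
      (stdGaussian (En n)))
    (hfg : Integrable (fun x ↦ acceptProb V dt q x *
      (proposalChange V dt f q x * proposalChange V dt g q x)) (stdGaussian (En n))) :
    obscov V dt f g q =
      ∫ x, acceptProb V dt q x * (proposalChange V dt f q x * proposalChange V dt g q x)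
          ∂stdGaussian (En n) -
        (∫ x, acceptProb V dt q x * proposalChange V dt f q x ∂stdGaussian (En n)) *
          ∫ x, acceptProb V dt q x * proposalChange V dt g q x ∂stdGaussian (En n) := by
  set w := ∫ x, acceptProb V dt q x * proposalChange V dt f q x ∂stdGaussian (En n) with hw
  set z := ∫ x, acceptProb V dt q x * proposalChange V dt g q x ∂stdGaussian (En n) with hz
  have hchange (x : En n) : acceptProb V dt q x *
        proposalChange V dt (fun y ↦ (f y - (f 0 + w)) * (g y - (g 0 + z))) q x =
      acceptProb V dt q x * (proposalChange V dt f q x * proposalChange V dt g q x) -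
        w * (acceptProb V dt q x * proposalChange V dt g q x) -
        z * (acceptProb V dt q x * proposalChange V dt f q x) := by
    simp only [proposalChange]
    ring
  have hint : Integrable (fun x ↦
      acceptProb V dt q x * (proposalChange V dt f q x * proposalChange V dt g q x) -
        w * (acceptProb V dt q x * proposalChange V dt g q x)) (stdGaussian (En n)) :=
    hfg.sub (hg.const_mul w)
  change obsbar V dt (fun y ↦ (f y - obsbar V dt f q) * (g y - obsbar V dt g q)) q = _
  rw [obsbar_eq hdt hf, obsbar_eq hdt hg, ← hw, ← hz, obsbar_eq hdt]
  · simp only [hchange]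
    rw [integral_sub hint (hf.const_mul z), integral_sub hfg (hg.const_mul w), integral_const_mul,
      integral_const_mul, ← hw, ← hz]
    ring
  · simp only [hchange]
    exact hint.sub (hf.const_mul z)

theorem isBigO_obscov_sub {ι : Type*} {dt : ι → ℝ} {q : ι → En n} {K : NNReal} {B : ℝ} {l m : ℕ}
    (hV : Differentiable ℝ V) (hK : LipschitzWith K (gradient V)) (hB : ∀ q, ‖gradient V q‖ ≤ B)
    (hf : ContDiff ℝ 3 f) (hfl : iteratedFDeriv ℝ 3 f =O[⊤] fun x ↦ (1 + ‖x‖) ^ l)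
    (hg : ContDiff ℝ 3 g) (hgm : iteratedFDeriv ℝ 3 g =O[⊤] fun x ↦ (1 + ‖x‖) ^ m)
    (hdt : ∀ i, 0 < dt i) (hs : (fun i ↦ √(2 * dt i)) =O[⊤] fun _ ↦ (1 : ℝ)) :
    (fun i ↦ obscov V (dt i) f g (q i) - 2 * dt i * ⟪gradient f 0, gradient g 0⟫) =O[⊤]
      fun i ↦ √(2 * dt i) ^ 4 := by
  have ha := isBigO_one_comp_of_norm_le hB q
  have hμ := hasPolynomialMoments_of_isGaussian (stdGaussian (En n))
  have hW := hasParityExpansion_langevinIncrement hf hfl hs ha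
  have hZ := hasParityExpansion_langevinIncrement hg hgm hs ha
  have hr (i : ι) := continuous_acceptProb hV.continuous hK.continuous (hdt i) (q i)
  have hr' := polyBigO_one_sub_acceptProb (q := q) hV hK hB hdt hs
  have hWZ := (hW.polyBigO hs).mul (hZ.polyBigO hs)
  refine (hW.isBigO_covariance_accept hZ hμ hs hr hr').congr_left fun i ↦ ?_
  rw [obscov_eq (hdt i)]
  · rw [integral_fderiv_smul_mul_stdGaussian, Real.sq_sqrt (by linarith [hdt i])]
    rfl
  · exact ((hW.polyBigO hs).mul_of_one_sub hr' hs).integrable hμ ((hr i).mul (hW.continuous i))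
  · exact ((hZ.polyBigO hs).mul_of_one_sub hr' hs).integrable hμ ((hr i).mul (hZ.continuous i))
  · exact (hWZ.mul_of_one_sub hr' hs).integrable hμ
      ((hr i).mul ((hW.continuous i).mul (hZ.continuous i)))

end Covariance

/-! ### Gradients of periodic functions -/

section Periodic

variable {E X : Type*} [NormedAddCommGroup E] [NormedSpace ℝ E]

theorem exists_norm_le_of_periodic_basis [NormedAddCommGroup X] {ι : Type*} [Finite ι]
    (b : Module.Basis ι ℝ E) {F : E → X} (hF : Continuous F)
    (hper : ∀ i, Function.Periodic F (b i)) : ∃ B, ∀ x, ‖F x‖ ≤ B := by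
  have hlattice : ∀ v ∈ Submodule.span ℤ (Set.range b), Function.Periodic F v := fun v hv ↦ by
    induction hv using Submodule.span_induction with
    | mem v hv => obtain ⟨i, rfl⟩ := hv; exact hper i
    | zero => exact fun x ↦ by rw [add_zero]
    | add v w _ _ hv hw => exact hv.add_period hw
    | smul k v _ hv => exact hv.zsmul k
  have := Fintype.ofFinite ι
  have := Module.Finite.of_basis b
  have := FiniteDimensional.proper ℝ E
  obtain ⟨B, hB⟩ :=
    (ZSpan.fundamentalDomain_isBounded b).isCompact_closure.exists_bound_of_continuousOn
      hF.continuousOn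
  refine ⟨B, fun x ↦ ?_⟩
  rw [← (hlattice _ (ZSpan.floor b x).2).sub_eq]
  exact hB _ (subset_closure (ZSpan.fract_mem_fundamentalDomain b x))

theorem periodic_fderiv [NormedAddCommGroup X] [NormedSpace ℝ X] {F : E → X} {v : E}
    (hF : Function.Periodic F v) : Function.Periodic (fderiv ℝ F) v := fun x ↦ by
  rw [← fderiv_comp_add_right]
  exact congrArg (fderiv ℝ · x) (funext hF)

theorem exists_norm_gradient_le_of_periodic_basis {E ι : Type*} [NormedAddCommGroup E]
    [InnerProductSpace ℝ E] [CompleteSpace E] [Finite ι] (b : Module.Basis ι ℝ E) {V : E → ℝ}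
    (hV : ContDiff ℝ 1 V) (hper : ∀ i, Function.Periodic V (b i)) :
    ∃ B, ∀ x, ‖gradient V x‖ ≤ B := by
  obtain ⟨B, hB⟩ := exists_norm_le_of_periodic_basis b (hV.continuous_fderiv one_ne_zero)
    fun i ↦ periodic_fderiv (hper i)
  exact ⟨B, fun x ↦ by simpa only [gradient, LinearIsometryEquiv.norm_map] using hB x⟩

theorem exists_lipschitzWith_gradient_of_periodic_basis {E ι : Type*} [NormedAddCommGroup E]
    [InnerProductSpace ℝ E] [CompleteSpace E] [Finite ι] (b : Module.Basis ι ℝ E) {V : E → ℝ}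
    (hV : ContDiff ℝ 2 V) (hper : ∀ i, Function.Periodic V (b i)) :
    ∃ K, LipschitzWith K (gradient V) := by
  have hV' : ContDiff ℝ 1 (fderiv ℝ V) := hV.fderiv_right (by norm_num)
  obtain ⟨K, hK⟩ := exists_norm_le_of_periodic_basis b (hV'.continuous_fderiv one_ne_zero)
    fun i ↦ periodic_fderiv (periodic_fderiv (hper i))
  have hlip : LipschitzWith K.toNNReal (fderiv ℝ V) :=
    lipschitzWith_of_nnnorm_fderiv_le (hV'.differentiable one_ne_zero) fun x ↦
      NNReal.le_toNNReal_of_coe_le (hK x)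
  exact ⟨_, (InnerProductSpace.toDual ℝ E).symm.lipschitz.comp hlip⟩

theorem exists_basis_eq_smul_single (n : ℕ) {L : ℝ} (hL : L ≠ 0) :
    ∃ b : Module.Basis (Fin n) ℝ (EuclideanSpace ℝ (Fin n)),
      ∀ i, b i = L • EuclideanSpace.single i (1 : ℝ) :=
  ⟨(EuclideanSpace.basisFun (Fin n) ℝ).toBasis.isUnitSMul fun _ ↦ hL.isUnit, fun i ↦ by
    simp [Module.Basis.isUnitSMul_apply]⟩

end Periodic

theorem stmt16_general {n : ℕ} {V : En n → ℝ} (hV : Differentiable ℝ V) {K : NNReal}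
    (hK : LipschitzWith K (gradient V)) {B : ℝ} (hB : ∀ q, ‖gradient V q‖ ≤ B) {f g : En n → ℝ}
    (hf : ContDiff ℝ 3 f) (hg : ContDiff ℝ 3 g)
    (hfgrowth : ∃ (C : ℝ) (m : ℕ), ∀ x, ‖iteratedFDeriv ℝ 3 f x‖ ≤ C * (1 + ‖x‖) ^ m)
    (hggrowth : ∃ (C : ℝ) (m : ℕ), ∀ x, ‖iteratedFDeriv ℝ 3 g x‖ ≤ C * (1 + ‖x‖) ^ m) :
    ∃ C ≥ (0 : ℝ), ∃ dts > (0 : ℝ), ∀ dt : ℝ, 0 < dt → dt ≤ dts → ∀ q : En n,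
      |dt⁻¹ * obscov V dt f g q - 2 * ⟪gradient f 0, gradient g 0⟫| ≤ C * dt := by
  obtain ⟨l, hfl⟩ := exists_isBigO_one_add_norm_pow hfgrowth
  obtain ⟨m, hgm⟩ := exists_isBigO_one_add_norm_pow hggrowth
  have hs : (fun p : Set.Ioc (0 : ℝ) 1 × En n ↦ √(2 * p.1)) =O[⊤] fun _ ↦ (1 : ℝ) :=
    isBigO_top.2 ⟨√2, fun p ↦ by
      rw [Real.norm_of_nonneg (Real.sqrt_nonneg _), norm_one, mul_one]
      exact Real.sqrt_le_sqrt (by linarith [p.1.2.2])⟩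
  obtain ⟨C, hC0, hC⟩ := (isBigO_obscov_sub (q := Prod.snd) hV hK hB hf hfl hg hgm
    (fun p ↦ p.1.2.1) hs).exists_nonneg
  refine ⟨4 * C, by positivity, 1, one_pos, fun dt hdt hdt1 q ↦ ?_⟩
  have hbound := isBigOWith_top.1 hC (⟨dt, hdt, hdt1⟩, q)
  rw [norm_pow, Real.norm_of_nonneg (Real.sqrt_nonneg _), pow_mul' _ 2 2,
    Real.sq_sqrt (by positivity)] at hbound
  calc |dt⁻¹ * obscov V dt f g q - 2 * ⟪gradient f 0, gradient g 0⟫|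
      = dt⁻¹ * |obscov V dt f g q - 2 * dt * ⟪gradient f 0, gradient g 0⟫| := by
        rw [← abs_of_pos (inv_pos.2 hdt), ← abs_mul, abs_of_pos (inv_pos.2 hdt)]
        congr 1
        field_simp
    _ ≤ dt⁻¹ * (C * (2 * dt) ^ 2) := by gcongr; exact hbound
    _ = 4 * C * dt := by field_simp; ring

theorem stmt16 (n : ℕ) (hn : 1 ≤ n) (L : ℝ) (hL : 0 < L)
    (V : En n → ℝ) (hV : ContDiff ℝ (⊤ : ℕ∞) V)
    (hper : ∀ (q : En n) (i : Fin n), V (q + L • EuclideanSpace.single i (1 : ℝ)) = V q)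
    (f g : En n → ℝ) (hf : ContDiff ℝ (⊤ : ℕ∞) f) (hg : ContDiff ℝ (⊤ : ℕ∞) g)
    (hfgrowth : ∀ k : ℕ, ∃ (Ck : ℝ) (m : ℕ), ∀ x : En n,
      ‖iteratedFDeriv ℝ k f x‖ ≤ Ck * (1 + ‖x‖) ^ m)
    (hggrowth : ∀ k : ℕ, ∃ (Ck : ℝ) (m : ℕ), ∀ x : En n,
      ‖iteratedFDeriv ℝ k g x‖ ≤ Ck * (1 + ‖x‖) ^ m) :
    ∃ C ≥ (0 : ℝ), ∃ dts > (0 : ℝ), ∀ dt : ℝ, 0 < dt → dt ≤ dts → ∀ q : En n,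
      |dt⁻¹ * obscov V dt f g q - 2 * ⟪gradient f 0, gradient g 0⟫| ≤ C * dt := by
  obtain ⟨b, hb⟩ := exists_basis_eq_smul_single n hL.ne'
  have hVb (i : Fin n) : Function.Periodic V (b i) := by simpa only [hb] using! (hper · i)
  obtain ⟨B, hB⟩ := exists_norm_gradient_le_of_periodic_basis b (mod_cast contDiff_infty.1 hV 1) hVb
  obtain ⟨K, hK⟩ :=
    exists_lipschitzWith_gradient_of_periodic_basis b (mod_cast contDiff_infty.1 hV 2) hVb
  exact stmt16_general (hV.differentiable (by simp)) hK hB (mod_cast contDiff_infty.1 hf 3)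
    (mod_cast contDiff_infty.1 hg 3) (hfgrowth 3) (hggrowth 3)
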